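/- Every left ideal H of R = K⟨x,y⟩/(xy−1) is of the form H = Σ ⊕ Rp(x) (internal direct sum of left R-submodules) where p(x) ∈ K[x] is a polynomial in x (possibly zero) and Σ is a semisimple submodule contained in the socle I = ⟨1−yx⟩ of R. -/

import Mathlib

noncomputable section

/-- The defining relation of the Toeplitz/Jacobson algebra: `x * y = 1`. -/
inductive ToeplitzRel (K : Type*) [Field K] :
    FreeAlgebra K (Fin 2) → FreeAlgebra K (Fin 2) → Prop
  | rel : ToeplitzRel K (FreeAlgebra.ι K 0 * FreeAlgebra.ι K 1) 1

/-- The Toeplitz/Jacobson algebra `R = K⟨x,y⟩/(xy-1)`. -/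
abbrev Toeplitz (K : Type*) [Field K] := RingQuot (ToeplitzRel K)

variable (K : Type*) [Field K]

/-- The image of the generator `x` in `R`. -/
def tx : Toeplitz K := RingQuot.mkAlgHom K (ToeplitzRel K) (FreeAlgebra.ι K 0)

/-- The image of the generator `y` in `R`. -/
def ty : Toeplitz K := RingQuot.mkAlgHom K (ToeplitzRel K) (FreeAlgebra.ι K 1)

/-- `f n = y^(n-1) x^(n-1) - y^n x^n`. -/
def tf (n : ℕ) : Toeplitz K := ty K ^ (n-1) * tx K ^ (n-1) - ty K ^ n * tx K ^ n

/-!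
Let `A` be generated over `K` by `x` and `y` with `x * y = 1`. If `x * v = 0`, then `A v = K[y] v`,
because `x` sends `g(y) v` to `((g - g(0)) / y) v`. Applying `x ^ n` to a nonzero `g(y) v` with
`deg g = n` recovers `v` up to a nonzero scalar, so `A v` is simple or zero. The two-sided ideal `I`
generated by `1 - y * x` is, as a left ideal, generated by the `v` with `x * v = 0`, hence it is
semisimple.

Every `r : A` is moved into `K[x]` by some `x ^ n`, and `r ≡ y ^ n * (x ^ n * r)` modulo `I`. Hence
`H = (H ⊓ I) + A p(x)`, where `p` generates the ideal of polynomials `q` with `q(x) ∈ H`, and a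
complement `Σ` of `(H ⊓ I) ⊓ A p(x)` in the semisimple module `H ⊓ I` gives `H = Σ ⊕ A p(x)`.
-/

section

open Polynomial

theorem exists_le_disjoint_sup_eq {α : Type*} [Lattice α] [OrderBot α] (a b : α)
    [ComplementedLattice (Set.Iic a)] : ∃ c ≤ a, Disjoint c b ∧ c ⊔ b = a ⊔ b := by
  obtain ⟨⟨c, hca⟩, hc⟩ := exists_isCompl (⟨a ⊓ b, inf_le_left⟩ : Set.Iic a)
  obtain ⟨hdisj, hsup⟩ := Set.Iic.isCompl_iff.mp hc
  refine ⟨c, hca, disjoint_iff_inf_le.mpr ?_, ?_⟩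
  · exact hdisj.le_bot.trans' (le_inf (inf_le_inf_right b hca) inf_le_left)
  · calc c ⊔ b = (a ⊓ b ⊔ b) ⊔ c := by
          rw [sup_eq_right.mpr (inf_le_right : a ⊓ b ≤ b), sup_comm]
      _ = (a ⊓ b ⊔ c) ⊔ b := sup_right_comm _ _ _
      _ = a ⊔ b := by rw [hsup]

theorem isSemisimpleModule_of_le {R M : Type*} [Ring R] [AddCommGroup M] [Module R M]
    {S N : Submodule R M} [IsSemisimpleModule R N] (hSN : S ≤ N) : IsSemisimpleModule R S :=
  .of_injective (Submodule.inclusion hSN) (Submodule.inclusion_injective hSN)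

theorem exists_isSemisimpleModule_le_disjoint_sup_eq {R M : Type*} [Ring R] [AddCommGroup M]
    [Module R M] (N Q : Submodule R M) [IsSemisimpleModule R N] :
    ∃ S ≤ N, IsSemisimpleModule R S ∧ Disjoint S Q ∧ S ⊔ Q = N ⊔ Q := by
  have : ComplementedLattice (Set.Iic N) := (Submodule.mapIic N).complementedLattice
  obtain ⟨S, hSN, hdisj, hsup⟩ := exists_le_disjoint_sup_eq N Q
  exact ⟨S, hSN, isSemisimpleModule_of_le hSN, hdisj, hsup⟩

theorem one_sub_pow_mul_pow_mem {A : Type*} [Ring A] {x y : A} (J : TwoSidedIdeal A)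
    (hJ : 1 - y * x ∈ J) (n : ℕ) : 1 - y ^ n * x ^ n ∈ J := by
  have hyx : (y : J.ringCon.Quotient) * x = 1 :=
    (J.ringCon.eq.mpr ((J.rel_iff _ _).mpr hJ)).symm
  exact (J.rel_iff _ _).mp (J.ringCon.eq.mp (pow_mul_pow_eq_one n hyx).symm)

section Semiring

variable {R A M : Type*} [CommSemiring R] [Semiring A] [Algebra R A] [AddCommMonoid M] [Module A M]
  {x y : A} {v : M}

theorem smul_aeval_smul_eq_divX (hxy : x * y = 1) (hv : x • v = 0) (g : R[X]) :
    x • aeval y g • v = aeval y g.divX • v := by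
  have hg : aeval y g = y * aeval y g.divX + algebraMap R A (g.coeff 0) := by
    simpa only [map_add, map_mul, aeval_X, aeval_C] using
      congrArg (aeval y) g.X_mul_divX_add.symm
  rw [hg, smul_smul, mul_add, ← mul_assoc, hxy, one_mul, ← Algebra.commutes, add_smul, mul_smul,
    hv, smul_zero, add_zero]

theorem pow_smul_aeval_smul_eq_coeff_smul (hxy : x * y = 1) (hv : x • v = 0) {n : ℕ} {g : R[X]}
    (hg : g.natDegree ≤ n) : x ^ n • aeval y g • v = algebraMap R A (g.coeff n) • v := by
  induction n generalizing g with
  | zero =>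
    rw [eq_C_of_natDegree_le_zero hg, aeval_C, pow_zero, one_smul, coeff_C_zero]
  | succ n ih =>
    have hdivX : g.divX.natDegree ≤ n := by
      rw [natDegree_divX_eq_natDegree_tsub_one]
      omega
    rw [pow_succ, mul_smul, smul_aeval_smul_eq_divX hxy hv, ih hdivX, coeff_divX]

theorem exists_smul_eq_aeval_smul (hxy : x * y = 1) (hgen : Algebra.adjoin R {x, y} = ⊤)
    (hv : x • v = 0) (r : A) : ∃ g : R[X], r • v = aeval y g • v := by
  suffices h : ∀ g : R[X], ∃ g' : R[X], r • aeval y g • v = aeval y g' • v by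
    simpa only [map_one, one_smul] using h 1
  have hr : r ∈ Algebra.adjoin R {x, y} := hgen ▸ Algebra.mem_top
  induction hr using Algebra.adjoin_induction with
  | mem s hs =>
    intro g
    obtain rfl | rfl := hs
    · exact ⟨g.divX, smul_aeval_smul_eq_divX hxy hv g⟩
    · exact ⟨X * g, by rw [map_mul, aeval_X, mul_smul]⟩
  | algebraMap c =>
    exact fun g ↦ ⟨C c * g, by rw [map_mul, aeval_C, mul_smul]⟩
  | add a b _ _ iha ihb =>
    intro g
    obtain ⟨ga, ha⟩ := iha g
    obtain ⟨gb, hb⟩ := ihb g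
    exact ⟨ga + gb, by rw [add_smul, ha, hb, map_add, add_smul]⟩
  | mul a b _ _ iha ihb =>
    intro g
    obtain ⟨gb, hb⟩ := ihb g
    obtain ⟨ga, ha⟩ := iha gb
    exact ⟨ga, by rw [mul_smul, hb, ha]⟩

theorem exists_pow_mul_eq_aeval (hxy : x * y = 1) (hgen : Algebra.adjoin R {x, y} = ⊤) (r : A) :
    ∃ (n : ℕ) (p : R[X]), x ^ n * r = aeval x p := by
  have hr : r ∈ Algebra.adjoin R {x, y} := hgen ▸ Algebra.mem_top
  induction hr using Algebra.adjoin_induction with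
  | mem s hs =>
    obtain rfl | rfl := hs
    · exact ⟨0, X, by rw [pow_zero, one_mul, aeval_X]⟩
    · exact ⟨1, 1, by rw [pow_one, hxy, map_one]⟩
  | algebraMap c => exact ⟨0, C c, by rw [pow_zero, one_mul, aeval_C]⟩
  | add a b _ _ iha ihb =>
    obtain ⟨n, p, ha⟩ := iha
    obtain ⟨m, q, hb⟩ := ihb
    refine ⟨m + n, X ^ m * p + X ^ n * q, ?_⟩
    calc x ^ (m + n) * (a + b) = x ^ m * (x ^ n * a) + x ^ n * (x ^ m * b) := by
          rw [mul_add, ← mul_assoc, ← mul_assoc, ← pow_add, ← pow_add, add_comm n m]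
      _ = aeval x (X ^ m * p + X ^ n * q) := by simp only [ha, hb, map_add, map_mul, aeval_X_pow]
  | mul a b _ _ iha ihb =>
    obtain ⟨n, p, ha⟩ := iha
    obtain ⟨m, q, hb⟩ := ihb
    have hcomm : x ^ m * aeval x p = aeval x p * x ^ m := by
      simpa only [aeval_X_pow] using ((commute_X_pow p m).map (aeval x)).eq
    refine ⟨m + n, p * q, ?_⟩
    calc x ^ (m + n) * (a * b) = x ^ m * (x ^ n * a) * b := by rw [pow_add]; simp only [mul_assoc]
      _ = aeval x p * (x ^ m * b) := by rw [ha, hcomm, mul_assoc]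
      _ = aeval x (p * q) := by rw [hb, map_mul]

end Semiring

section Ring

variable {A : Type*} [Ring A] {x y : A}

theorem asIdeal_span_one_sub_mul (hxy : x * y = 1) :
    (TwoSidedIdeal.span {1 - y * x}).asIdeal = Submodule.span A {v : A | x * v = 0} := by
  apply le_antisymm
  · intro m hm
    rw [TwoSidedIdeal.mem_asIdeal, TwoSidedIdeal.mem_span_iff_mem_addSubgroup_closure] at hm
    refine (AddSubgroup.closure_le (Submodule.span A {v : A | x * v = 0}).toAddSubgroup).mpr ?_ hm
    rintro _ ⟨_, ⟨a, -, _, rfl, rfl⟩, b, -, rfl⟩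
    have hker : x * ((1 - y * x) * b) = 0 := by
      rw [← mul_assoc, mul_sub, mul_one, ← mul_assoc, hxy, one_mul, sub_self, zero_mul]
    have hmem : a • ((1 - y * x) * b) ∈ Submodule.span A {v : A | x * v = 0} :=
      Submodule.smul_mem _ a (Submodule.subset_span hker)
    rwa [smul_eq_mul, ← mul_assoc] at hmem
  · refine Submodule.span_le.mpr fun v (hv : x * v = 0) ↦ ?_
    have hfix : (1 - y * x) * v = v := by rw [sub_mul, one_mul, mul_assoc, hv, mul_zero, sub_zero]
    exact hfix ▸ TwoSidedIdeal.mul_mem_right _ _ v (TwoSidedIdeal.subset_span rfl)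

theorem inf_asIdeal_sup_span_aeval_eq {R : Type*} [CommSemiring R] [Algebra R A] (hxy : x * y = 1)
    (hgen : Algebra.adjoin R {x, y} = ⊤) {J : TwoSidedIdeal A} (hJ : 1 - y * x ∈ J) {H : Ideal A}
    {p : R[X]} (hp : H.comap (aeval x) = Ideal.span {p}) :
    H ⊓ J.asIdeal ⊔ Submodule.span A {aeval x p} = H := by
  have hle : Submodule.span A {aeval x p} ≤ H :=
    (Submodule.span_singleton_le_iff_mem _ _).mpr <|
      Ideal.mem_comap.mp (hp ▸ Ideal.mem_span_singleton_self p)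
  refine le_antisymm (sup_le inf_le_left hle) fun r hr ↦ ?_
  obtain ⟨n, q, hq⟩ := exists_pow_mul_eq_aeval hxy hgen r
  obtain ⟨s, rfl⟩ : ∃ s, s * p = q := by
    rw [← Ideal.mem_span_singleton', ← hp, Ideal.mem_comap, ← hq]
    exact H.mul_mem_left _ hr
  have hyx : y ^ n * (x ^ n * r) ∈ Submodule.span A {aeval x p} := by
    rw [hq, map_mul, ← mul_assoc]
    exact Submodule.smul_mem _ _ (Submodule.mem_span_singleton_self _)
  have hsub : r - y ^ n * (x ^ n * r) ∈ J := by
    simpa only [sub_mul, one_mul, mul_assoc] using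
      J.mul_mem_right _ r (one_sub_pow_mul_pow_mem J hJ n)
  exact Submodule.mem_sup.mpr ⟨_, ⟨sub_mem hr (hle hyx), hsub⟩, _, hyx, sub_add_cancel _ _⟩

end Ring

section Field

variable {K} {A M : Type*} [Ring A] [Algebra K A] [AddCommGroup M] [Module A M] {x y : A} {v : M}

theorem mem_span_singleton_aeval_smul (hxy : x * y = 1) (hv : x • v = 0) {g : K[X]} (hg : g ≠ 0) :
    v ∈ Submodule.span A {aeval y g • v} := by
  refine Submodule.mem_span_singleton.mpr
    ⟨algebraMap K A g.leadingCoeff⁻¹ * x ^ g.natDegree, ?_⟩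
  rw [mul_smul, pow_smul_aeval_smul_eq_coeff_smul hxy hv le_rfl, smul_smul, ← map_mul,
    coeff_natDegree, inv_mul_cancel₀ (leadingCoeff_ne_zero.mpr hg), map_one, one_smul]

theorem isAtom_span_singleton_of_smul_eq_zero (hxy : x * y = 1)
    (hgen : Algebra.adjoin K {x, y} = ⊤) (hv : x • v = 0) (hv₀ : v ≠ 0) :
    IsAtom (Submodule.span A {v}) := by
  refine isAtom_iff_le_of_ge.mpr ⟨Submodule.span_singleton_eq_bot.not.mpr hv₀, fun N hN hNv ↦ ?_⟩
  obtain ⟨w, hwN, hw₀⟩ := N.ne_bot_iff.mp hN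
  obtain ⟨r, rfl⟩ := Submodule.mem_span_singleton.mp (hNv hwN)
  obtain ⟨g, hg⟩ := exists_smul_eq_aeval_smul hxy hgen hv r
  rw [hg] at hwN hw₀
  have hg₀ : g ≠ 0 := by
    rintro rfl
    exact hw₀ (by rw [map_zero, zero_smul])
  have hv_mem : v ∈ Submodule.span A {aeval y g • v} := mem_span_singleton_aeval_smul hxy hv hg₀
  have hvN : v ∈ N := (Submodule.span_singleton_le_iff_mem _ N).mpr hwN hv_mem
  exact (Submodule.span_singleton_le_iff_mem v N).mpr hvN

theorem isSemisimpleModule_span_setOf_smul_eq_zero (hxy : x * y = 1)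
    (hgen : Algebra.adjoin K {x, y} = ⊤) :
    IsSemisimpleModule A (Submodule.span A {v : M | x • v = 0}) := by
  rw [← Submodule.span_sdiff_singleton_zero, Submodule.span_eq_iSup_of_singleton_spans]
  refine isSemisimpleModule_biSup_of_isSemisimpleModule_submodule fun v ⟨hv, hv₀⟩ ↦ ?_
  have : IsSimpleModule A (Submodule.span A {v}) :=
    isSimpleModule_iff_isAtom.mpr (isAtom_span_singleton_of_smul_eq_zero hxy hgen hv hv₀)
  infer_instance

theorem toeplitz_left_ideal_structure_general (hxy : x * y = 1)
    (hgen : Algebra.adjoin K {x, y} = ⊤) (H : Submodule A A) :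
    ∃ (p : K[X]) (S : Submodule A A),
      S ≤ TwoSidedIdeal.asIdeal (TwoSidedIdeal.span {1 - y * x}) ∧
      IsSemisimpleModule A S ∧
      Disjoint S (Submodule.span A {aeval x p}) ∧
      S ⊔ Submodule.span A {aeval x p} = H := by
  obtain ⟨p, hp⟩ := IsPrincipalIdealRing.principal (Ideal.comap (aeval (R := K) x) H)
  set I := TwoSidedIdeal.span {1 - y * x} with hI
  have hmem : 1 - y * x ∈ I := TwoSidedIdeal.subset_span (Set.mem_singleton _)
  have : IsSemisimpleModule A I.asIdeal := by
    rw [hI, asIdeal_span_one_sub_mul hxy]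
    exact isSemisimpleModule_span_setOf_smul_eq_zero hxy hgen
  have : IsSemisimpleModule A ↥(H ⊓ I.asIdeal) := isSemisimpleModule_of_le inf_le_right
  obtain ⟨S, hS, hss, hdisj, hsup⟩ :=
    exists_isSemisimpleModule_le_disjoint_sup_eq (H ⊓ I.asIdeal) (Submodule.span A {aeval x p})
  exact ⟨p, S, hS.trans inf_le_right, hss, hdisj,
    hsup.trans (inf_asIdeal_sup_span_aeval_eq hxy hgen hmem hp)⟩

end Field

theorem tx_mul_ty : tx K * ty K = 1 := by
  simpa only [map_mul, map_one, tx, ty] using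
    RingQuot.mkAlgHom_rel K (ToeplitzRel.rel (K := K))

theorem adjoin_tx_ty : Algebra.adjoin K {tx K, ty K} = ⊤ := by
  have hrange : Set.range (FreeAlgebra.ι K : Fin 2 → FreeAlgebra K (Fin 2)) =
      {FreeAlgebra.ι K 0, FreeAlgebra.ι K 1} := by
    ext
    simp [Fin.exists_fin_two, eq_comm]
  calc Algebra.adjoin K {tx K, ty K}
      = (Algebra.adjoin K (Set.range (FreeAlgebra.ι K))).map
          (RingQuot.mkAlgHom K (ToeplitzRel K)) := by
        rw [AlgHom.map_adjoin, hrange, Set.image_pair, tx, ty]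
    _ = ⊤ := by
        rw [FreeAlgebra.adjoin_range_ι, Algebra.map_top, AlgHom.range_eq_top]
        exact RingQuot.mkAlgHom_surjective K (ToeplitzRel K)

end

/-- Every left ideal `H` of `R = K⟨x,y⟩/(xy-1)` is of the form `H = Σ ⊕ Rp(x)`, an
internal direct sum where `p(x)` is a polynomial in `x` (possibly zero) and `Σ` is a
semisimple submodule contained in the socle `I = ⟨1-yx⟩`. -/
theorem toeplitz_left_ideal_structure (H : Submodule (Toeplitz K) (Toeplitz K)) :
    ∃ (p : Polynomial K) (S : Submodule (Toeplitz K) (Toeplitz K)),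
      S ≤ TwoSidedIdeal.asIdeal (TwoSidedIdeal.span {1 - ty K * tx K}) ∧
      IsSemisimpleModule (Toeplitz K) S ∧
      Disjoint S (Submodule.span (Toeplitz K) {Polynomial.aeval (tx K) p}) ∧
      S ⊔ Submodule.span (Toeplitz K) {Polynomial.aeval (tx K) p} = H :=
  toeplitz_left_ideal_structure_general (tx_mul_ty K) (adjoin_tx_ty K) H
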